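/- arXiv:2005.10622 — 4 statements merged into one kernel-verified Lean document; each statement's English description precedes it below -/
import Mathlib

section
/- Let (X, 𝒜, μ) be a σ-finite measure space, let p_E, p_θ, p_α : X → [0,∞) be densities (measurable with ∫ p dμ = 1), let ω ∈ (0,1), and set p_ω := ω·p_θ + (1−ω)·p_α and D*(x) = p_ω(x)/(p_E(x)+p_ω(x)) on {p_E + p_ω > 0}. If D : X → (0,1) is measurable, V(D) = V(D*), and V(D*) is finite, then D = D* μ-almost everywhere on the set {x : p_E(x) + p_ω(x) > 0}, where V(D) := ∫ p_E·log(1−D) dμ + ω·∫ p_θ·log D dμ + (1−ω)·∫ p_α·log D dμ. -/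
/-!
STATEMENT 2 (Lemma 1 of Triple-GAIL, uniqueness of the optimal discriminator):
with the setup of Statement 1, if `D : X → (0,1)` is measurable and achieves
the same value of the objective as `D*`, and `V(D*)` is finite, then
`D = D*` μ-a.e. on the set `{x : p_E(x) + p_ω(x) > 0}`.

Since `D` takes values in `(0,1)` and the densities are nonnegative, every
integrand of `V` is nonpositive; hence `V(D)` is faithfully represented in the
extended reals as the negation (in `EReal`) of an `ℝ≥0∞`-valued lower integral
of the negated integrands; finiteness of `V(D*)` is `V(D*) ≠ ⊥`.
-/

open MeasureTheory
open scoped ENNReal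

noncomputable section

/-- The negation of the discriminator objective, valued in `ℝ≥0∞`
(all integrands below are nonnegative). -/
def negObj {X : Type*} [MeasurableSpace X] (μ : Measure X)
    (pE pθ pα : X → ℝ) (ω : ℝ) (D : X → ℝ) : ℝ≥0∞ :=
  (∫⁻ x, ENNReal.ofReal (pE x * (-Real.log (1 - D x))) ∂μ)
    + ENNReal.ofReal ω * (∫⁻ x, ENNReal.ofReal (pθ x * (-Real.log (D x))) ∂μ)
    + ENNReal.ofReal (1 - ω) * (∫⁻ x, ENNReal.ofReal (pα x * (-Real.log (D x))) ∂μ)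

/-- The discriminator objective
`V(D) = ∫ p_E·log(1−D) dμ + ω·∫ p_θ·log D dμ + (1−ω)·∫ p_α·log D dμ`,
valued in the extended reals. -/
def discObj {X : Type*} [MeasurableSpace X] (μ : Measure X)
    (pE pθ pα : X → ℝ) (ω : ℝ) (D : X → ℝ) : EReal :=
  -(negObj μ pE pθ pα ω D : EReal)

/-- The optimal discriminator `D* = p_ω/(p_E + p_ω)` where `p_E + p_ω > 0`,
and `1/2` elsewhere. -/
def Dstar {X : Type*} (pE pθ pα : X → ℝ) (ω : ℝ) : X → ℝ := fun x =>
  if 0 < pE x + (ω * pθ x + (1 - ω) * pα x) then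
    (ω * pθ x + (1 - ω) * pα x) / (pE x + (ω * pθ x + (1 - ω) * pα x))
  else 1 / 2

/-- Strict pointwise optimality of `b/(a+b)` (with the convention `0 * log 0 = 0`). -/
theorem pointwise_strict (a b d : ℝ) (ha : 0 ≤ a) (hb : 0 ≤ b) (hab : 0 < a + b)
    (hd : d ∈ Set.Ioo (0 : ℝ) 1) (hne : d ≠ b / (a + b)) :
    a * (-Real.log (1 - b / (a + b))) + b * (-Real.log (b / (a + b)))
      < a * (-Real.log (1 - d)) + b * (-Real.log d) := by
  obtain ⟨hd0, hd1⟩ := hd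
  have l1 : Real.log d < 0 := Real.log_neg hd0 hd1
  have l2 : Real.log (1 - d) < 0 := Real.log_neg (by linarith) (by linarith)
  rcases ha.eq_or_lt with rfl | ha
  · have hb' : 0 < b := by linarith
    have : b / (0 + b) = 1 := by rw [zero_add]; exact div_self hb'.ne'
    rw [this]
    simp only [Real.log_one]
    nlinarith
  rcases hb.eq_or_lt with rfl | hb
  · simp only [zero_div, sub_zero, Real.log_one]
    nlinarith
  have hs : 0 < b / (a + b) := by positivity
  have hs1 : 1 - b / (a + b) = a / (a + b) := by field_simp; ring
  have hs2 : 0 < a / (a + b) := by positivity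
  rw [hs1]
  have hv : d / (b / (a + b)) ≠ 1 := by
    intro h
    exact hne ((div_eq_one_iff_eq hs.ne').1 h)
  have h1 := Real.log_lt_sub_one_of_pos (div_pos hd0 hs) hv
  have h2 := Real.log_le_sub_one_of_pos (div_pos (sub_pos.2 hd1) hs2)
  rw [Real.log_div hd0.ne' hs.ne'] at h1
  rw [Real.log_div (sub_pos.2 hd1).ne' hs2.ne'] at h2
  have h1' := mul_lt_mul_of_pos_left h1 hb
  have h2' := mul_le_mul_of_nonneg_left h2 ha.le
  have e1 : b * (d / (b / (a + b)) - 1) = d * (a + b) - b := by field_simp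
  have e2 : a * ((1 - d) / (a / (a + b)) - 1) = (1 - d) * (a + b) - a := by field_simp
  rw [e1] at h1'
  rw [e2] at h2'
  linarith

/-- `negObj` as a single lower integral. -/
theorem negObj_eq {X : Type*} [MeasurableSpace X] (μ : Measure X)
    (pE pθ pα : X → ℝ)
    (hpEm : Measurable pE) (hpE0 : ∀ x, 0 ≤ pE x)
    (hpθm : Measurable pθ) (hpθ0 : ∀ x, 0 ≤ pθ x)
    (hpαm : Measurable pα) (hpα0 : ∀ x, 0 ≤ pα x)
    (ω : ℝ) (hω : ω ∈ Set.Ioo (0 : ℝ) 1)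
    (D : X → ℝ) (hDm : Measurable D) (hD01 : ∀ x, D x ∈ Set.Icc (0 : ℝ) 1) :
    negObj μ pE pθ pα ω D = ∫⁻ x, ENNReal.ofReal (pE x * (-Real.log (1 - D x))
      + (ω * pθ x + (1 - ω) * pα x) * (-Real.log (D x))) ∂μ := by
  have h1ω : 0 ≤ 1 - ω := sub_nonneg.2 hω.2.le
  unfold negObj
  rw [← lintegral_const_mul _ (by fun_prop), ← lintegral_const_mul _ (by fun_prop),
    ← lintegral_add_left (by fun_prop), ← lintegral_add_left (by fun_prop)]
  refine lintegral_congr fun x => ?_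
  have l1 : 0 ≤ -Real.log (D x) := neg_nonneg.2 (Real.log_nonpos (hD01 x).1 (hD01 x).2)
  have l2 : 0 ≤ -Real.log (1 - D x) := neg_nonneg.2
    (Real.log_nonpos (by linarith [(hD01 x).2]) (by linarith [(hD01 x).1]))
  have hE := mul_nonneg (hpE0 x) l2
  have hθ := mul_nonneg hω.1.le (mul_nonneg (hpθ0 x) l1)
  have hα := mul_nonneg h1ω (mul_nonneg (hpα0 x) l1)
  rw [← ENNReal.ofReal_mul hω.1.le, ← ENNReal.ofReal_mul h1ω,
    ← ENNReal.ofReal_add hE hθ, ← ENNReal.ofReal_add (add_nonneg hE hθ) hα]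
  congr 1
  ring

theorem optimal_discriminator_unique
    {X : Type*} [MeasurableSpace X] (μ : Measure X) [SigmaFinite μ]
    (pE pθ pα : X → ℝ)
    (hpEm : Measurable pE) (hpE0 : ∀ x, 0 ≤ pE x) (hpE1 : ∫ x, pE x ∂μ = 1)
    (hpθm : Measurable pθ) (hpθ0 : ∀ x, 0 ≤ pθ x) (hpθ1 : ∫ x, pθ x ∂μ = 1)
    (hpαm : Measurable pα) (hpα0 : ∀ x, 0 ≤ pα x) (hpα1 : ∫ x, pα x ∂μ = 1)
    (ω : ℝ) (hω : ω ∈ Set.Ioo (0 : ℝ) 1)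
    (D : X → ℝ) (hDm : Measurable D) (hD01 : ∀ x, D x ∈ Set.Ioo (0 : ℝ) 1)
    (hfin : discObj μ pE pθ pα ω (Dstar pE pθ pα ω) ≠ ⊥)
    (heq : discObj μ pE pθ pα ω D = discObj μ pE pθ pα ω (Dstar pE pθ pα ω)) :
    ∀ᵐ x ∂μ, 0 < pE x + (ω * pθ x + (1 - ω) * pα x) →
      D x = Dstar pE pθ pα ω x := by
  have h1ω : 0 ≤ 1 - ω := sub_nonneg.2 hω.2.le
  have hp0 : ∀ x, 0 ≤ ω * pθ x + (1 - ω) * pα x := fun x =>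
    add_nonneg (mul_nonneg hω.1.le (hpθ0 x)) (mul_nonneg h1ω (hpα0 x))
  have hSm : Measurable (Dstar pE pθ pα ω) := by
    unfold Dstar
    refine Measurable.ite (measurableSet_lt measurable_const (by fun_prop)) ?_ measurable_const
    fun_prop
  have hS01 : ∀ x, Dstar pE pθ pα ω x ∈ Set.Icc (0 : ℝ) 1 := by
    intro x
    unfold Dstar
    split_ifs with h
    · exact ⟨div_nonneg (hp0 x) h.le, (div_le_one h).2 (by linarith [hpE0 x])⟩
    · constructor <;> norm_num
  unfold discObj at hfin heq
  have heq' : negObj μ pE pθ pα ω D = negObj μ pE pθ pα ω (Dstar pE pθ pα ω) :=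
    EReal.coe_ennreal_injective (neg_injective heq)
  have hfin' : negObj μ pE pθ pα ω (Dstar pE pθ pα ω) ≠ ∞ := by
    intro h
    rw [h] at hfin
    simp at hfin
  have hDI : ∀ x, D x ∈ Set.Icc (0 : ℝ) 1 := fun x => ⟨(hD01 x).1.le, (hD01 x).2.le⟩
  rw [negObj_eq μ pE pθ pα hpEm hpE0 hpθm hpθ0 hpαm hpα0 ω hω D hDm hDI,
    negObj_eq μ pE pθ pα hpEm hpE0 hpθm hpθ0 hpαm hpα0 ω hω _ hSm hS01] at heq'
  rw [negObj_eq μ pE pθ pα hpEm hpE0 hpθm hpθ0 hpαm hpα0 ω hω _ hSm hS01] at hfin'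
  have key : ∀ x, 0 < pE x + (ω * pθ x + (1 - ω) * pα x) → D x ≠ Dstar pE pθ pα ω x →
      pE x * (-Real.log (1 - Dstar pE pθ pα ω x))
        + (ω * pθ x + (1 - ω) * pα x) * (-Real.log (Dstar pE pθ pα ω x))
      < pE x * (-Real.log (1 - D x))
        + (ω * pθ x + (1 - ω) * pα x) * (-Real.log (D x)) := by
    intro x hx hne
    have hS : Dstar pE pθ pα ω x
        = (ω * pθ x + (1 - ω) * pα x) / (pE x + (ω * pθ x + (1 - ω) * pα x)) := if_pos hx
    rw [hS] at hne ⊢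
    exact pointwise_strict _ _ _ (hpE0 x) (hp0 x) hx (hD01 x) hne
  have hnn : ∀ x, 0 ≤ pE x * (-Real.log (1 - Dstar pE pθ pα ω x))
        + (ω * pθ x + (1 - ω) * pα x) * (-Real.log (Dstar pE pθ pα ω x)) := by
    intro x
    have l1 := Real.log_nonpos (hS01 x).1 (hS01 x).2
    have l2 := Real.log_nonpos (x := 1 - Dstar pE pθ pα ω x)
      (by linarith [(hS01 x).2]) (by linarith [(hS01 x).1])
    exact add_nonneg (mul_nonneg (hpE0 x) (neg_nonneg.2 l2))
      (mul_nonneg (hp0 x) (neg_nonneg.2 l1))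
  have hae := ae_eq_of_ae_le_of_lintegral_le (μ := μ)
    (f := fun x => ENNReal.ofReal (pE x * (-Real.log (1 - Dstar pE pθ pα ω x))
        + (ω * pθ x + (1 - ω) * pα x) * (-Real.log (Dstar pE pθ pα ω x))))
    (g := fun x => ENNReal.ofReal (pE x * (-Real.log (1 - D x))
        + (ω * pθ x + (1 - ω) * pα x) * (-Real.log (D x))))
    (Filter.Eventually.of_forall fun x => by
      apply ENNReal.ofReal_le_ofReal
      by_cases hx : 0 < pE x + (ω * pθ x + (1 - ω) * pα x)
      · by_cases hne : D x = Dstar pE pθ pα ω x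
        · rw [hne]
        · exact (key x hx hne).le
      · have e1 : pE x = 0 := by linarith [hpE0 x, hp0 x]
        have e2 : ω * pθ x + (1 - ω) * pα x = 0 := by linarith [hpE0 x, hp0 x]
        rw [e1, e2]
        simp)
    hfin' (by fun_prop) heq'.le
  filter_upwards [hae] with x hx hpos
  by_contra hne
  have hlt := key x hpos hne
  exact absurd hx ((ENNReal.ofReal_lt_ofReal_iff (lt_of_le_of_lt (hnn x) hlt)).2 hlt).ne

end
end

section
/- Let (X, 𝒜, μ) be a σ-finite measure space, let p_E : X → [0,∞) be a density (measurable with ∫ p_E dμ = 1), and let ω ∈ (0,1). For every pair of densities p_θ, p_α : X → [0,∞) satisfying ω·p_θ + (1−ω)·p_α = p_E μ-almost everywhere, the optimal value of the adversarial game equals −log 4; that is, with p_ω := ω·p_θ + (1−ω)·p_α and the convention 0·log 0 = 0, ∫ p_E·log(p_E/(p_E+p_ω)) dμ + ∫ p_ω·log(p_ω/(p_E+p_ω)) dμ = −log 4. In particular, distinct pairs (p_θ, p_α), such as (p_E, p_E) and any other mixture representation of p_E, all achieve the equilibrium value. -/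
/-!
STATEMENT 7 (multiplicity of equilibria, Lemma 2 of Triple-GAIL):
for any densities `p_θ, p_α` with `ω·p_θ + (1−ω)·p_α = p_E` μ-a.e., the
optimal value of the adversarial game equals `−log 4`:
`∫ p_E·log(p_E/(p_E+p_ω)) dμ + ∫ p_ω·log(p_ω/(p_E+p_ω)) dμ = −log 4`.
(The convention `0·log 0 = 0` holds definitionally, since `Real.log 0 = 0`
and `x / 0 = 0` in Lean.)
-/

open MeasureTheory

theorem equilibrium_value_of_mixture
    {X : Type*} [MeasurableSpace X] (μ : Measure X) [SigmaFinite μ]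
    (pE pθ pα : X → ℝ)
    (hpEm : Measurable pE) (hpE0 : ∀ x, 0 ≤ pE x) (hpE1 : ∫ x, pE x ∂μ = 1)
    (hpθm : Measurable pθ) (hpθ0 : ∀ x, 0 ≤ pθ x) (hpθ1 : ∫ x, pθ x ∂μ = 1)
    (hpαm : Measurable pα) (hpα0 : ∀ x, 0 ≤ pα x) (hpα1 : ∫ x, pα x ∂μ = 1)
    (ω : ℝ) (hω : ω ∈ Set.Ioo (0 : ℝ) 1)
    (hmix : (fun x => ω * pθ x + (1 - ω) * pα x) =ᵐ[μ] pE) :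
    (∫ x, pE x *
        Real.log (pE x / (pE x + (ω * pθ x + (1 - ω) * pα x))) ∂μ)
      + (∫ x, (ω * pθ x + (1 - ω) * pα x) *
          Real.log ((ω * pθ x + (1 - ω) * pα x) /
            (pE x + (ω * pθ x + (1 - ω) * pα x))) ∂μ)
      = -Real.log 4 := by
  have key : ∀ a : ℝ, a * Real.log (a / (a + a)) = a * (-Real.log 2) := by
    intro a
    by_cases ha : a = 0
    · simp [ha]
    · have h : a / (a + a) = 2⁻¹ := by
        rw [← two_mul]
        field_simp
      rw [h, Real.log_inv]
  have h1 : (∫ x, pE x *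
      Real.log (pE x / (pE x + (ω * pθ x + (1 - ω) * pα x))) ∂μ)
      = ∫ x, pE x * (-Real.log 2) ∂μ := by
    apply integral_congr_ae
    filter_upwards [hmix] with x hx
    rw [hx, key]
  have h2 : (∫ x, (ω * pθ x + (1 - ω) * pα x) *
          Real.log ((ω * pθ x + (1 - ω) * pα x) /
            (pE x + (ω * pθ x + (1 - ω) * pα x))) ∂μ)
      = ∫ x, pE x * (-Real.log 2) ∂μ := by
    apply integral_congr_ae
    filter_upwards [hmix] with x hx
    rw [hx, key]
  have h4 : Real.log 4 = 2 * Real.log 2 := by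
    rw [show (4 : ℝ) = 2 ^ 2 by norm_num, Real.log_pow]
    norm_num
  rw [h1, h2, integral_mul_const, hpE1, h4]
  ring
end

section
/- Let (X, 𝒜, μ) be a σ-finite measure space, let p_E, p_θ, p_α : X → [0,∞) be densities (measurable with ∫ p dμ = 1), let ω ∈ (0,1) and λ_E > 0, and set p_ω := ω·p_θ + (1−ω)·p_α. Define (with convention 0·log 0 = 0) JSD(p,q) := (1/2)·∫ p·log(p/((p+q)/2)) dμ + (1/2)·∫ q·log(q/((p+q)/2)) dμ and KL(p‖q) := ∫ p·log(p/q) dμ. Then the regularized equilibrium objective U(p_θ, p_α) := 2·JSD(p_E, p_ω) + λ_E·KL(p_E ‖ p_α) satisfies U(p_θ, p_α) ≥ 0, and U(p_θ, p_α) = 0 if and only if p_θ = p_E μ-a.e. and p_α = p_E μ-a.e. -/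
/-!
STATEMENT 9 (Theorem 1 of Triple-GAIL, divergence form with the supervised
regularizer `R_E`): for densities `p_E, p_θ, p_α`, `ω ∈ (0,1)`, `λ_E > 0` and
`p_ω = ω·p_θ + (1−ω)·p_α`, the regularized equilibrium objective
`U(p_θ, p_α) = 2·JSD(p_E, p_ω) + λ_E·KL(p_E ‖ p_α)` satisfies `U ≥ 0`, with
equality iff `p_θ = p_E` μ-a.e. and `p_α = p_E` μ-a.e.

`KL(p‖q) = ∫ p·log(p/q) dμ` is taken in the extended reals with the
convention `0·log 0 = 0` (so `KL = +∞` where `q = 0 < p` on a non-null set):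
for densities (`∫ p dμ = ∫ q dμ = 1`) it is faithfully represented as the
lower integral of the nonnegative function `p·log(p/q) − p + q` (with value
`⊤` on `{q = 0, p ≠ 0}`), since `∫ (q − p) dμ = 0`.
-/

open MeasureTheory
open scoped ENNReal

noncomputable section

/-- Jensen–Shannon divergence between densities `p` and `q` w.r.t. `μ`. -/
def JSD {X : Type*} [MeasurableSpace X] (μ : Measure X) (p q : X → ℝ) : ℝ :=
  (1 / 2) * ∫ x, p x * Real.log (p x / ((p x + q x) / 2)) ∂μ
    + (1 / 2) * ∫ x, q x * Real.log (q x / ((p x + q x) / 2)) ∂μ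

/-- Kullback–Leibler divergence `KL(p‖q) = ∫ p·log(p/q) dμ` between densities,
valued in `[0,∞]`. -/
def KLD {X : Type*} [MeasurableSpace X] (μ : Measure X) (p q : X → ℝ) : ℝ≥0∞ :=
  ∫⁻ x, (if q x = 0 ∧ p x ≠ 0 then ⊤
    else ENNReal.ofReal (p x * Real.log (p x / q x) - p x + q x)) ∂μ

open InformationTheory in
theorem aux_nonneg {p m : ℝ} (hp : 0 ≤ p) (hm : 0 ≤ m) (h : m = 0 → p = 0) :
    0 ≤ p * Real.log (p / m) - p + m ∧ (p * Real.log (p / m) - p + m = 0 ↔ p = m) := by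
  rcases hm.eq_or_lt with h0 | h0
  · have := h h0.symm
    subst h0
    subst this
    simp
  · have e : p * Real.log (p / m) - p + m = m * klFun (p / m) := by
      rw [klFun_apply]; field_simp; ring
    rw [e]
    refine ⟨mul_nonneg hm (klFun_nonneg (div_nonneg hp hm)), ?_⟩
    rw [mul_eq_zero, klFun_eq_zero_iff (div_nonneg hp hm), div_eq_one_iff_eq h0.ne']
    exact ⟨fun h => h.resolve_left h0.ne', Or.inr⟩

theorem aux_upper {p q : ℝ} (hp : 0 ≤ p) (hq : 0 ≤ q) :
    p * Real.log (p / ((p + q) / 2)) ≤ p * Real.log 2 := by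
  rcases hp.eq_or_lt with h0 | h0
  · simp [← h0]
  · have hm : 0 < (p + q) / 2 := by linarith
    refine mul_le_mul_of_nonneg_left ?_ hp
    refine Real.log_le_log (by positivity) ?_
    rw [div_le_iff₀ hm]
    linarith

theorem aux_lower {p q : ℝ} (hp : 0 ≤ p) (hq : 0 ≤ q) :
    p - (p + q) / 2 ≤ p * Real.log (p / ((p + q) / 2)) := by
  have := (aux_nonneg hp (m := (p + q) / 2) (by linarith) (fun h => by linarith)).1
  linarith

theorem aux_int {X : Type*} [MeasurableSpace X] (μ : Measure X) (p q : X → ℝ)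
    (hpm : Measurable p) (hqm : Measurable q) (hp : ∀ x, 0 ≤ p x) (hq : ∀ x, 0 ≤ q x)
    (hpi : Integrable p μ) (hqi : Integrable q μ) :
    Integrable (fun x => p x * Real.log (p x / ((p x + q x) / 2))) μ := by
  refine Integrable.mono' (hpi.add hqi) (by fun_prop) (Filter.Eventually.of_forall fun x => ?_)
  have h1 := aux_upper (hp x) (hq x)
  have h2 := aux_lower (hp x) (hq x)
  have h3 : Real.log 2 ≤ 1 := by linarith [Real.log_two_lt_d9]
  have h4 := mul_le_mul_of_nonneg_left h3 (hp x)
  have h5 := hp x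
  have h6 := hq x
  rw [Real.norm_eq_abs, abs_le]
  simp only [Pi.add_apply]
  constructor <;> linarith

theorem aux_JSD {X : Type*} [MeasurableSpace X] (μ : Measure X) (p q : X → ℝ)
    (hpm : Measurable p) (hqm : Measurable q) (hp : ∀ x, 0 ≤ p x) (hq : ∀ x, 0 ≤ q x)
    (hpi : Integrable p μ) (hqi : Integrable q μ) :
    0 ≤ JSD μ p q ∧ (JSD μ p q = 0 ↔ p =ᵐ[μ] q) := by
  have i1 := aux_int μ p q hpm hqm hp hq hpi hqi
  have i2 : Integrable (fun x => q x * Real.log (q x / ((p x + q x) / 2))) μ := by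
    simpa only [add_comm] using aux_int μ q p hqm hpm hq hp hqi hpi
  have e : JSD μ p q = (1 / 2) * ∫ x, (p x * Real.log (p x / ((p x + q x) / 2))
      + q x * Real.log (q x / ((p x + q x) / 2))) ∂μ := by
    rw [integral_add i1 i2, JSD]; ring
  have a1 := fun x => aux_nonneg (hp x) (m := (p x + q x) / 2)
    (by linarith [hp x, hq x]) (fun h => by linarith [hp x, hq x])
  have a2 := fun x => aux_nonneg (hq x) (m := (p x + q x) / 2)
    (by linarith [hp x, hq x]) (fun h => by linarith [hp x, hq x])
  have nn : ∀ x, 0 ≤ p x * Real.log (p x / ((p x + q x) / 2))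
      + q x * Real.log (q x / ((p x + q x) / 2)) := fun x => by
    linarith [(a1 x).1, (a2 x).1]
  rw [e]
  refine ⟨mul_nonneg (by norm_num) (integral_nonneg nn), ?_⟩
  rw [mul_eq_zero, or_iff_right (by norm_num), integral_eq_zero_iff_of_nonneg nn (i1.add i2)]
  refine Filter.eventually_congr (Filter.Eventually.of_forall fun x => ?_)
  simp only [Pi.zero_apply]
  constructor
  · intro h
    have := (a1 x).2.1 (by linarith [(a1 x).1, (a2 x).1])
    linarith
  · intro h
    have h1 := (a1 x).2.2 (by linarith)
    have h2 := (a2 x).2.2 (by linarith)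
    linarith

theorem aux_KLD {X : Type*} [MeasurableSpace X] (μ : Measure X) (p q : X → ℝ)
    (hpm : Measurable p) (hqm : Measurable q) (hp : ∀ x, 0 ≤ p x) (hq : ∀ x, 0 ≤ q x) :
    KLD μ p q = 0 ↔ q =ᵐ[μ] p := by
  have ms : MeasurableSet {x | q x = 0 ∧ p x ≠ 0} :=
    (measurableSet_eq_fun hqm measurable_const).inter
      (measurableSet_eq_fun hpm measurable_const).compl
  rw [KLD, lintegral_eq_zero_iff (Measurable.ite ms measurable_const (by fun_prop))]
  refine Filter.eventually_congr (Filter.Eventually.of_forall fun x => ?_)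
  simp only [Pi.zero_apply]
  split_ifs with h
  · simp only [ENNReal.top_ne_zero, false_iff]
    intro h'
    exact h.2 (h' ▸ h.1)
  · have a := aux_nonneg (hp x) (hq x) (fun h0 => by by_contra h1; exact h ⟨h0, h1⟩)
    rw [ENNReal.ofReal_eq_zero, eq_comm, ← a.2]
    exact ⟨fun h' => le_antisymm h' a.1, fun h' => h'.le⟩

theorem regularized_equilibrium_RE
    {X : Type*} [MeasurableSpace X] (μ : Measure X) [SigmaFinite μ]
    (pE pθ pα : X → ℝ)
    (hpEm : Measurable pE) (hpE0 : ∀ x, 0 ≤ pE x) (hpE1 : ∫ x, pE x ∂μ = 1)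
    (hpθm : Measurable pθ) (hpθ0 : ∀ x, 0 ≤ pθ x) (hpθ1 : ∫ x, pθ x ∂μ = 1)
    (hpαm : Measurable pα) (hpα0 : ∀ x, 0 ≤ pα x) (hpα1 : ∫ x, pα x ∂μ = 1)
    (ω : ℝ) (hω : ω ∈ Set.Ioo (0 : ℝ) 1)
    (lamE : ℝ) (hlamE : 0 < lamE) :
    0 ≤ ((2 * JSD μ pE (fun x => ω * pθ x + (1 - ω) * pα x) : ℝ) : EReal)
        + ((lamE : ℝ) : EReal) * ((KLD μ pE pα : ℝ≥0∞) : EReal) ∧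
    (((2 * JSD μ pE (fun x => ω * pθ x + (1 - ω) * pα x) : ℝ) : EReal)
        + ((lamE : ℝ) : EReal) * ((KLD μ pE pα : ℝ≥0∞) : EReal) = 0
      ↔ (pθ =ᵐ[μ] pE ∧ pα =ᵐ[μ] pE)) := by
  have iE : Integrable pE μ := .of_integral_ne_zero (by simp [hpE1])
  have iθ : Integrable pθ μ := .of_integral_ne_zero (by simp [hpθ1])
  have iα : Integrable pα μ := .of_integral_ne_zero (by simp [hpα1])
  obtain ⟨hω0, hω1⟩ := hω
  have J := aux_JSD μ pE (fun x => ω * pθ x + (1 - ω) * pα x) hpEm (by fun_prop) hpE0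
    (fun x => add_nonneg (mul_nonneg hω0.le (hpθ0 x))
      (mul_nonneg (by linarith) (hpα0 x))) iE ((iθ.const_mul _).add (iα.const_mul _))
  have K := aux_KLD μ pE pα hpEm hpαm hpE0 hpα0
  have n1 : (0 : EReal) ≤ ((2 * JSD μ pE (fun x => ω * pθ x + (1 - ω) * pα x) : ℝ) : EReal) := by
    exact_mod_cast mul_nonneg zero_le_two J.1
  have n2 : (0 : EReal) ≤ ((lamE : ℝ) : EReal) * ((KLD μ pE pα : ℝ≥0∞) : EReal) :=
    mul_nonneg (by exact_mod_cast hlamE.le) (EReal.coe_ennreal_nonneg _)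
  refine ⟨add_nonneg n1 n2, ?_⟩
  rw [add_eq_zero_iff_of_nonneg n1 n2, mul_eq_zero, EReal.coe_eq_zero, EReal.coe_eq_zero,
    or_iff_right hlamE.ne', EReal.coe_ennreal_eq_zero, K, mul_eq_zero,
    or_iff_right (by norm_num : (2 : ℝ) ≠ 0), J.2]
  constructor
  · rintro ⟨h1, h2⟩
    refine ⟨?_, h2⟩
    filter_upwards [h1, h2] with x h1 h2
    have : ω * (pθ x - pE x) = 0 := by rw [h2] at h1; linarith
    have := (mul_eq_zero.1 this).resolve_left hω0.ne'
    linarith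
  · rintro ⟨h1, h2⟩
    refine ⟨?_, h2⟩
    filter_upwards [h1, h2] with x h1 h2
    rw [h1, h2]; ring

end
end

section
/- Let (X, 𝒜, μ) be a σ-finite measure space, let p_E, p_θ, p_α : X → [0,∞) be densities (measurable with ∫ p dμ = 1), let ω ∈ (0,1), λ_E > 0, λ_G ≥ 0, and set p_ω := ω·p_θ + (1−ω)·p_α. Define (with convention 0·log 0 = 0) JSD(p,q) := (1/2)·∫ p·log(p/((p+q)/2)) dμ + (1/2)·∫ q·log(q/((p+q)/2)) dμ and KL(p‖q) := ∫ p·log(p/q) dμ. Then U(p_θ, p_α) := 2·JSD(p_E, p_ω) + λ_E·KL(p_E ‖ p_α) + λ_G·KL(p_θ ‖ p_α) satisfies U(p_θ, p_α) ≥ 0, and U(p_θ, p_α) = 0 if and only if p_θ = p_α = p_E μ-almost everywhere; in particular the global equilibrium of the regularized game exists and is unique. -/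
/-!
STATEMENT 10 (Theorem 1 of Triple-GAIL, divergence form with both supervised
regularizers): for densities `p_E, p_θ, p_α`, `ω ∈ (0,1)`, `λ_E > 0`,
`λ_G ≥ 0` and `p_ω = ω·p_θ + (1−ω)·p_α`, the objective
`U(p_θ, p_α) = 2·JSD(p_E, p_ω) + λ_E·KL(p_E ‖ p_α) + λ_G·KL(p_θ ‖ p_α)`
satisfies `U ≥ 0`, with equality iff `p_θ = p_α = p_E` μ-a.e.; in particular
the global equilibrium of the regularized game exists and is unique.

`KL(p‖q) = ∫ p·log(p/q) dμ` is taken in the extended reals with the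
convention `0·log 0 = 0` (so `KL = +∞` where `q = 0 < p` on a non-null set):
for densities (`∫ p dμ = ∫ q dμ = 1`) it is faithfully represented as the
lower integral of the nonnegative function `p·log(p/q) − p + q` (with value
`⊤` on `{q = 0, p ≠ 0}`), since `∫ (q − p) dμ = 0`.
-/

open MeasureTheory
open scoped ENNReal

noncomputable section

/-- Pointwise Gibbs inequality. -/
lemma aux_gibbs {p m : ℝ} (hp : 0 ≤ p) (hm : 0 ≤ m) (h : m = 0 → p = 0) :
    0 ≤ p * Real.log (p / m) - p + m ∧
      (p * Real.log (p / m) - p + m = 0 → p = m) := by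
  rcases hp.eq_or_lt with rfl | hp
  · simp [hm, eq_comm]
  have hm : 0 < m := lt_of_le_of_ne hm (fun e => hp.ne' (h e.symm))
  have hl : Real.log (p / m) = - Real.log (m / p) := by
    rw [← Real.log_inv, inv_div]
  have e : p * (m / p) = m := by field_simp
  rw [hl]
  constructor
  · have := Real.log_le_sub_one_of_pos (div_pos hm hp)
    nlinarith [mul_le_mul_of_nonneg_left this hp.le]
  · intro h0
    by_contra hne
    have hne' : m / p ≠ 1 := by
      intro h1
      rw [div_eq_one_iff_eq hp.ne'] at h1
      exact hne h1.symm
    have := Real.log_lt_sub_one_of_pos (div_pos hm hp) hne'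
    nlinarith [mul_lt_mul_of_pos_left this hp]

lemma aux_half {X : Type*} [MeasurableSpace X] (μ : Measure X) (p q : X → ℝ)
    (hpm : Measurable p) (hp0 : ∀ x, 0 ≤ p x) (hp1 : ∫ x, p x ∂μ = 1)
    (hqm : Measurable q) (hq0 : ∀ x, 0 ≤ q x) (hq1 : ∫ x, q x ∂μ = 1) :
    0 ≤ ∫ x, p x * Real.log (p x / ((p x + q x) / 2)) ∂μ ∧
    (∫ x, p x * Real.log (p x / ((p x + q x) / 2)) ∂μ = 0 → q =ᵐ[μ] p) := by
  have hpi : Integrable p μ := by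
    by_contra h
    rw [integral_undef h] at hp1
    exact zero_ne_one hp1
  have hqi : Integrable q μ := by
    by_contra h
    rw [integral_undef h] at hq1
    exact zero_ne_one hq1
  have hmi : Integrable (fun x => (p x + q x) / 2) μ := (hpi.add hqi).div_const 2
  have key : ∀ x, 0 ≤ p x * Real.log (p x / ((p x + q x) / 2)) - p x + (p x + q x) / 2 ∧
      (p x * Real.log (p x / ((p x + q x) / 2)) - p x + (p x + q x) / 2 = 0 →
        p x = (p x + q x) / 2) := fun x =>
    aux_gibbs (hp0 x) (by linarith [hp0 x, hq0 x]) (fun h => by linarith [hp0 x, hq0 x])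
  have hub : ∀ x, p x * Real.log (p x / ((p x + q x) / 2)) ≤ p x := by
    intro x
    rcases (hp0 x).eq_or_lt with h | h
    · simp [← h]
    have hq := hq0 x
    have hpos : 0 < p x / ((p x + q x) / 2) := by positivity
    have h2 : p x / ((p x + q x) / 2) ≤ 2 := by
      rw [div_le_iff₀ (by positivity)]
      linarith
    have := Real.log_le_sub_one_of_pos hpos
    nlinarith
  have hFi : Integrable (fun x => p x * Real.log (p x / ((p x + q x) / 2))) μ := by
    refine (hpi.add hmi).mono' ?_ ?_
    · exact (by fun_prop : Measurable _).aestronglyMeasurable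
    · refine Filter.Eventually.of_forall (fun x => ?_)
      have h1 := (key x).1
      have h2 := hub x
      have h3 := hp0 x
      have h4 := hq0 x
      simp only [Pi.add_apply, Real.norm_eq_abs]
      rw [abs_le]
      constructor <;> linarith
  have hGi : Integrable (fun x => p x * Real.log (p x / ((p x + q x) / 2)) - p x
      + (p x + q x) / 2) μ := (hFi.sub hpi).add hmi
  have hm1 : ∫ x, (p x + q x) / 2 ∂μ = 1 := by
    rw [integral_div, integral_add hpi hqi, hp1, hq1]
    norm_num
  have heq : ∫ x, (p x * Real.log (p x / ((p x + q x) / 2)) - p x + (p x + q x) / 2) ∂μ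
      = ∫ x, p x * Real.log (p x / ((p x + q x) / 2)) ∂μ := by
    have hFp : Integrable (fun x => p x * Real.log (p x / ((p x + q x) / 2)) - p x) μ :=
      hFi.sub hpi
    rw [integral_add hFp hmi, integral_sub hFi hpi, hp1, hm1]
    ring
  rw [← heq]
  refine ⟨integral_nonneg (fun x => (key x).1), fun h => ?_⟩
  rw [integral_eq_zero_iff_of_nonneg (fun x => (key x).1) hGi] at h
  filter_upwards [h] with x hx
  have := (key x).2 hx
  linarith

lemma aux_kld {X : Type*} [MeasurableSpace X] (μ : Measure X) (p q : X → ℝ)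
    (hpm : Measurable p) (hp0 : ∀ x, 0 ≤ p x)
    (hqm : Measurable q) (hq0 : ∀ x, 0 ≤ q x) :
    KLD μ p q = 0 ↔ q =ᵐ[μ] p := by
  unfold KLD
  rw [lintegral_eq_zero_iff]
  · constructor
    · intro h
      filter_upwards [h] with x hx
      simp only [Pi.zero_apply] at hx
      split_ifs at hx with hc
      · simp at hx
      · have g := aux_gibbs (hp0 x) (hq0 x) (fun e => by
          by_contra hne
          exact hc ⟨e, hne⟩)
        rw [ENNReal.ofReal_eq_zero] at hx
        exact (g.2 (le_antisymm hx g.1)).symm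
    · intro h
      filter_upwards [h] with x hx
      have hc : ¬ (q x = 0 ∧ p x ≠ 0) := fun hc => hc.2 (hx ▸ hc.1)
      simp only [Pi.zero_apply]
      rw [if_neg hc, hx]
      by_cases h0 : p x = 0
      · simp [h0]
      · simp [div_self h0]
  · refine Measurable.ite ?_ measurable_const (by fun_prop)
    exact (hqm (measurableSet_singleton 0)).inter (hpm (measurableSet_singleton 0)).compl

theorem regularized_equilibrium_RE_RG
    {X : Type*} [MeasurableSpace X] (μ : Measure X) [SigmaFinite μ]
    (pE pθ pα : X → ℝ)
    (hpEm : Measurable pE) (hpE0 : ∀ x, 0 ≤ pE x) (hpE1 : ∫ x, pE x ∂μ = 1)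
    (hpθm : Measurable pθ) (hpθ0 : ∀ x, 0 ≤ pθ x) (hpθ1 : ∫ x, pθ x ∂μ = 1)
    (hpαm : Measurable pα) (hpα0 : ∀ x, 0 ≤ pα x) (hpα1 : ∫ x, pα x ∂μ = 1)
    (ω : ℝ) (hω : ω ∈ Set.Ioo (0 : ℝ) 1)
    (lamE : ℝ) (hlamE : 0 < lamE) (lamG : ℝ) (hlamG : 0 ≤ lamG) :
    0 ≤ ((2 * JSD μ pE (fun x => ω * pθ x + (1 - ω) * pα x) : ℝ) : EReal)
        + ((lamE : ℝ) : EReal) * ((KLD μ pE pα : ℝ≥0∞) : EReal)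
        + ((lamG : ℝ) : EReal) * ((KLD μ pθ pα : ℝ≥0∞) : EReal) ∧
    (((2 * JSD μ pE (fun x => ω * pθ x + (1 - ω) * pα x) : ℝ) : EReal)
        + ((lamE : ℝ) : EReal) * ((KLD μ pE pα : ℝ≥0∞) : EReal)
        + ((lamG : ℝ) : EReal) * ((KLD μ pθ pα : ℝ≥0∞) : EReal) = 0
      ↔ (pθ =ᵐ[μ] pE ∧ pα =ᵐ[μ] pE)) := by
  obtain ⟨hω0, hω1⟩ := hω
  have hint : ∀ p : X → ℝ, ∫ x, p x ∂μ = 1 → Integrable p μ := by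
    intro p hp
    by_contra h
    rw [integral_undef h] at hp
    exact zero_ne_one hp
  set q : X → ℝ := fun x => ω * pθ x + (1 - ω) * pα x with hq
  have hqm : Measurable q := by fun_prop
  have hq0 : ∀ x, 0 ≤ q x := fun x =>
    add_nonneg (mul_nonneg hω0.le (hpθ0 x)) (mul_nonneg (by linarith) (hpα0 x))
  have hq1 : ∫ x, q x ∂μ = 1 := by
    rw [hq, integral_add ((hint _ hpθ1).const_mul _) ((hint _ hpα1).const_mul _),
      integral_const_mul, integral_const_mul, hpθ1, hpα1]
    ring
  have h1 := aux_half μ pE q hpEm hpE0 hpE1 hqm hq0 hq1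
  have h2 := aux_half μ q pE hqm hq0 hq1 hpEm hpE0 hpE1
  simp only [add_comm (q _) (pE _)] at h2
  have hJ0 : 0 ≤ 2 * JSD μ pE q := by
    unfold JSD
    linarith [h1.1, h2.1]
  have hJ1 : 2 * JSD μ pE q = 0 → q =ᵐ[μ] pE := by
    unfold JSD
    intro h
    exact h1.2 (by linarith [h1.1, h2.1])
  have hJ2 : q =ᵐ[μ] pE → 2 * JSD μ pE q = 0 := by
    intro h
    unfold JSD
    rw [integral_eq_zero_of_ae, integral_eq_zero_of_ae]
    · ring
    all_goals
      filter_upwards [h] with x hx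
      rw [hx]
      by_cases h0 : pE x = 0
      · simp [h0]
      · simp [div_self h0]
  have a1 : (0 : EReal) ≤ ((2 * JSD μ pE q : ℝ) : EReal) := by exact_mod_cast hJ0
  have a2 : (0 : EReal) ≤ (lamE : EReal) * ((KLD μ pE pα : ℝ≥0∞) : EReal) :=
    mul_nonneg (by exact_mod_cast hlamE.le) (EReal.coe_ennreal_nonneg _)
  have a3 : (0 : EReal) ≤ (lamG : EReal) * ((KLD μ pθ pα : ℝ≥0∞) : EReal) :=
    mul_nonneg (by exact_mod_cast hlamG) (EReal.coe_ennreal_nonneg _)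
  refine ⟨add_nonneg (add_nonneg a1 a2) a3, ?_⟩
  rw [add_eq_zero_iff_of_nonneg (add_nonneg a1 a2) a3, add_eq_zero_iff_of_nonneg a1 a2]
  constructor
  · rintro ⟨⟨e1, e2⟩, -⟩
    have e1 := hJ1 (by exact_mod_cast e1)
    have e2 : pα =ᵐ[μ] pE := by
      rw [← aux_kld μ pE pα hpEm hpE0 hpαm hpα0]
      rcases mul_eq_zero.1 e2 with h | h
      · exact absurd (by exact_mod_cast h) hlamE.ne'
      · exact_mod_cast h
    refine ⟨?_, e2⟩
    filter_upwards [e1, e2] with x hx1 hx2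
    simp only [hq, hx2] at hx1
    have : ω * (pθ x - pE x) = 0 := by linarith
    rcases mul_eq_zero.1 this with h | h
    · exact absurd h hω0.ne'
    · linarith
  · rintro ⟨e1, e2⟩
    have k1 := (aux_kld μ pE pα hpEm hpE0 hpαm hpα0).2 e2
    have k2 := (aux_kld μ pθ pα hpθm hpθ0 hpαm hpα0).2 (e2.trans e1.symm)
    have k3 := hJ2 (by
      filter_upwards [e1, e2] with x hx1 hx2
      simp only [hq, hx1, hx2]
      ring)
    rw [k1, k2, k3]
    simp


end
end
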